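/- (No-broadcasting theorem) Two density matrices ρ and ρ' on a finite-dimensional Hilbert space H_S can be broadcast by one and the same quantum channel Λ: S → S₁S₂ (i.e., the marginals on S₁ and on S₂ of Λ[ρ] both equal ρ, and likewise for ρ') if and only if ρ and ρ' commute, [ρ, ρ'] = 0, i.e., if and only if they admit spectral decompositions with the same eigenvectors. -/

import Mathlib

open Matrix Kronecker ComplexOrder

section Defs
variable {α α' β β' γ : Type*} [Fintype α] [DecidableEq α] [Fintype α'] [DecidableEq α']
  [Fintype β] [DecidableEq β] [Fintype β'] [DecidableEq β'] [Fintype γ] [DecidableEq γ]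

/-- A density matrix: a positive semidefinite matrix with unit trace. -/
def IsDensityMatrix (ρ : Matrix β β ℂ) : Prop := ρ.PosSemidef ∧ ρ.trace = 1

/-- The map `id_α ⊗ Λ` induced on matrices over the product index type. -/
noncomputable def idTensor (Λ : Matrix β β ℂ →ₗ[ℂ] Matrix β' β' ℂ) :
    Matrix (α × β) (α × β) ℂ →ₗ[ℂ] Matrix (α × β') (α × β') ℂ where
  toFun M := Matrix.of fun p q => Λ (Matrix.of fun b b' => M (p.1, b) (q.1, b')) p.2 q.2
  map_add' M N := by
    ext p q
    show Λ (Matrix.of fun b b' => (M + N) (p.1, b) (q.1, b')) p.2 q.2 = _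
    have h : (Matrix.of fun b b' => (M + N) (p.1, b) (q.1, b')) =
        (Matrix.of fun b b' => M (p.1, b) (q.1, b')) +
          (Matrix.of fun b b' => N (p.1, b) (q.1, b')) := rfl
    rw [h, map_add]
    rfl
  map_smul' c M := by
    ext p q
    show Λ (Matrix.of fun b b' => (c • M) (p.1, b) (q.1, b')) p.2 q.2 = _
    have h : (Matrix.of fun b b' => (c • M) (p.1, b) (q.1, b')) =
        c • (Matrix.of fun b b' => M (p.1, b) (q.1, b')) := rfl
    rw [h, _root_.map_smul]
    rfl

/-- Complete positivity: all extensions `id ⊗ Λ` preserve positive semidefiniteness. -/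
def IsCompletelyPositive (Λ : Matrix β β ℂ →ₗ[ℂ] Matrix β' β' ℂ) : Prop :=
  ∀ (k : ℕ) (M : Matrix (Fin k × β) (Fin k × β) ℂ), M.PosSemidef → (idTensor Λ M).PosSemidef

/-- A quantum channel: a completely positive trace-preserving linear map. -/
def IsQuantumChannel (Λ : Matrix β β ℂ →ₗ[ℂ] Matrix β' β' ℂ) : Prop :=
  IsCompletelyPositive Λ ∧ ∀ X, (Λ X).trace = X.trace

/-- Partial trace over the second tensor factor. -/
noncomputable def ptraceRight (M : Matrix (α × β) (α × β) ℂ) : Matrix α α ℂ :=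
  Matrix.of fun a a' => ∑ b, M (a, b) (a', b)

/-- Partial trace over the first tensor factor. -/
noncomputable def ptraceLeft (M : Matrix (α × β) (α × β) ℂ) : Matrix β β ℂ :=
  Matrix.of fun b b' => ∑ a, M (a, b) (a, b')

end Defs

/-!
If a channel broadcasts `ρ` and `ρ'`, it has a Stinespring isometry `V`, and the operators `X ⊗ 1`
and `1 ⊗ X` on its output provide two commuting representations of the input matrices which
reproduce, through `V`, all expectation values of `ρ`, of `ρ'` and of `σ = ρ + ρ'`. For
`A = ρ σ⁻¹`, this forces `V` to intertwine `A`, and likewise `Aᴴ`, with its copies on both output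
factors. As the copy of `A` on the first factor commutes with the copy of `Aᴴ` on the second, `A`
is normal; together with the self-adjointness of `A σ = ρ`, Fuglede's theorem shows that `A`
commutes with `σ`, and hence `ρ` with `ρ'`. Conversely, commuting matrices have a joint orthonormal
eigenbasis, and the isometry `u ↦ u ⊗ u` cloning its vectors broadcasts all of them.
-/

section CStarAlgebra

/- By Fuglede–Putnam, `a * b = b * star a` also gives `star a * b = b * a`, so that `a` commutes
with `b * b`, hence with its positive square root `b`. -/
theorem commute_of_isStarNormal_of_isSelfAdjoint_mul {A : Type*} [CStarAlgebra A] [PartialOrder A]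
    [StarOrderedRing A] {a b : A} (ha : IsStarNormal a) (hb : 0 ≤ b)
    (hab : IsSelfAdjoint (a * b)) : Commute a b := by
  have hsemi : SemiconjBy b (star a) a := by
    simpa [SemiconjBy, hb.isSelfAdjoint.star_eq] using hab.star_eq
  have hstar : SemiconjBy b a (star a) := by
    simpa using hsemi.star_right ha.star ha
  have hsq : Commute a (b * b) := (hsemi.mul_left hstar).symm
  rw [← CFC.sqrt_mul_self b hb, CFC.sqrt_eq_cfc]
  exact (hsq.symm.cfc_nnreal NNReal.sqrt).symm

end CStarAlgebra

section PosSemidef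

variable {𝕜 m n : Type*} [RCLike 𝕜] [Fintype n]

open scoped MatrixOrder in
theorem exists_eq_conjTranspose_mul_self {σ : Matrix n n 𝕜} (hσ : σ.PosSemidef) :
    ∃ B : Matrix n n 𝕜, σ = Bᴴ * B := by
  classical
  exact CStarAlgebra.nonneg_iff_eq_star_mul_self.mp hσ.nonneg

theorem mul_eq_zero_of_trace_mul_mul_conjTranspose_eq_zero [Fintype m] {σ : Matrix n n 𝕜}
    (hσ : σ.PosSemidef) {M : Matrix m n 𝕜} (h : (M * σ * Mᴴ).trace = 0) : M * σ = 0 := by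
  obtain ⟨B, rfl⟩ := exists_eq_conjTranspose_mul_self hσ
  have hMB : M * Bᴴ = 0 := by
    rw [← trace_mul_conjTranspose_self_eq_zero_iff, ← h]
    simp only [conjTranspose_mul, conjTranspose_conjTranspose, Matrix.mul_assoc]
  rw [← Matrix.mul_assoc, hMB, Matrix.zero_mul]

theorem mul_eq_zero_of_mul_add_eq_zero [Finite m] {ρ τ : Matrix n n 𝕜} (hρ : ρ.PosSemidef)
    (hτ : τ.PosSemidef) {M : Matrix m n 𝕜} (h : M * (ρ + τ) = 0) : M * ρ = 0 := by
  have := Fintype.ofFinite m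
  have htrace : (M * ρ * Mᴴ).trace + (M * τ * Mᴴ).trace = 0 := by
    rw [← trace_add, ← Matrix.add_mul, ← Matrix.mul_add, h, Matrix.zero_mul, trace_zero]
  exact mul_eq_zero_of_trace_mul_mul_conjTranspose_eq_zero hρ
    ((add_eq_zero_iff_of_nonneg (hρ.mul_mul_conjTranspose_same M).trace_nonneg
      (hτ.mul_mul_conjTranspose_same M).trace_nonneg).mp htrace).1

theorem exists_isHermitian_commute_mul_mul_eq_self {σ : Matrix n n 𝕜} (hσ : σ.IsHermitian) :
    ∃ G : Matrix n n 𝕜, G.IsHermitian ∧ Commute σ G ∧ σ * G * σ = σ := by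
  classical
  have hsa : IsSelfAdjoint σ := hσ
  have hcont (f : ℝ → ℝ) : ContinuousOn f (spectrum ℝ σ) := σ.finite_real_spectrum.continuousOn f
  refine ⟨cfc (·⁻¹ : ℝ → ℝ) σ, cfc_predicate _ σ, ((Commute.refl σ).cfc_real _).symm, ?_⟩
  calc σ * cfc (·⁻¹ : ℝ → ℝ) σ * σ = cfc (fun x : ℝ => x * x⁻¹ * x) σ := by
        rw [cfc_mul _ _ σ (hcont _) (hcont _), cfc_mul _ _ σ (hcont _) (hcont _), cfc_id' ℝ σ hsa]
    _ = σ := by simp only [mul_inv_mul_cancel, cfc_id' ℝ σ hsa]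

/- `A = ρ σ⁻¹` with `σ = ρ + τ` and `G = σ⁻¹` a generalized inverse, so that `σ * G` is the
projection onto the support of `σ`, which contains that of `ρ`. -/
theorem exists_mul_add_eq_and_support {ρ τ : Matrix n n 𝕜} (hρ : ρ.PosSemidef)
    (hτ : τ.PosSemidef) :
    ∃ A G : Matrix n n 𝕜, A * (ρ + τ) = ρ ∧ ((ρ + τ) * G).IsHermitian ∧
      (ρ + τ) * G * A = A ∧ A * ((ρ + τ) * G) = A := by
  classical
  have hσ : (ρ + τ).IsHermitian := hρ.1.add hτ.1
  obtain ⟨G, hG, hcomm, hGσ⟩ := exists_isHermitian_commute_mul_mul_eq_self hσ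
  have hP : ((ρ + τ) * G).IsHermitian := (hσ.commute_iff hG).mp hcomm
  have hPρ : (ρ + τ) * G * ρ = ρ := by
    have : (1 - (ρ + τ) * G) * ρ = 0 := mul_eq_zero_of_mul_add_eq_zero hρ hτ
      (by rw [Matrix.sub_mul, Matrix.one_mul, hGσ, sub_self])
    rwa [Matrix.sub_mul, Matrix.one_mul, sub_eq_zero, eq_comm] at this
  have hρP : ρ * ((ρ + τ) * G) = ρ := by
    simpa only [conjTranspose_mul, hP.eq, hρ.1.eq] using congrArg conjTranspose hPρ
  refine ⟨ρ * G, G, ?_, hP, ?_, ?_⟩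
  · rw [Matrix.mul_assoc, ← hcomm.eq, hρP]
  · rw [← Matrix.mul_assoc, hPρ]
  · rw [Matrix.mul_assoc ρ, ← Matrix.mul_assoc G, ← hcomm.eq, ← Matrix.mul_assoc ρ, hρP]

end PosSemidef

section Intertwining

variable {𝕜 n N : Type*} [RCLike 𝕜] [Fintype n] [DecidableEq n] [Fintype N]

/- The defect `L * V - V * A` vanishes on the support of `σ` because its square, weighted by `σ`,
expands into four terms of equal trace and alternating signs. -/
theorem mul_mul_eq_mul_mul_of_trace_eq {V : Matrix N n 𝕜} (hV : Vᴴ * V = 1) {σ : Matrix n n 𝕜}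
    (hσ : σ.PosSemidef) {L : Matrix N N 𝕜} {A : Matrix n n 𝕜}
    (hLL : (Lᴴ * L * (V * σ * Vᴴ)).trace = (Aᴴ * A * σ).trace)
    (hL : (Lᴴ * (V * (A * σ) * Vᴴ)).trace = (Aᴴ * A * σ).trace) :
    L * V * σ = V * A * σ := by
  have hL' : (L * (V * (σ * Aᴴ) * Vᴴ)).trace = (Aᴴ * A * σ).trace := by
    have h := congrArg star hL
    rw [← trace_conjTranspose, ← trace_conjTranspose] at h
    simp only [conjTranspose_mul, conjTranspose_conjTranspose, hσ.1.eq] at h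
    rw [trace_mul_comm, Matrix.mul_assoc V, h, trace_mul_comm, Matrix.mul_assoc]
  have hA : (V * A * σ * (V * A)ᴴ).trace = (Aᴴ * A * σ).trace := by
    rw [trace_mul_comm, conjTranspose_mul, Matrix.mul_assoc Aᴴ, ← Matrix.mul_assoc Vᴴ,
      ← Matrix.mul_assoc Vᴴ, hV, Matrix.one_mul, Matrix.mul_assoc]
  have hdefect : ((L * V - V * A) * σ * (L * V - V * A)ᴴ).trace = 0 :=
    calc ((L * V - V * A) * σ * (L * V - V * A)ᴴ).trace
        = (L * (V * σ * Vᴴ) * Lᴴ).trace - (V * (A * σ) * Vᴴ * Lᴴ).trace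
          - (L * (V * (σ * Aᴴ) * Vᴴ)).trace + (V * A * σ * (V * A)ᴴ).trace := by
          simp only [conjTranspose_sub, conjTranspose_mul, Matrix.sub_mul, Matrix.mul_sub,
            trace_sub, Matrix.mul_assoc]
          ring
      _ = 0 := by
          rw [trace_mul_comm _ Lᴴ, trace_mul_comm _ Lᴴ, ← Matrix.mul_assoc, hLL, hL, hL', hA]
          ring
  have h := mul_eq_zero_of_trace_mul_mul_conjTranspose_eq_zero hσ hdefect
  rwa [Matrix.sub_mul, sub_eq_zero] at h

theorem isStarNormal_of_intertwining {R : Type*} [CommRing R] [StarRing R] {V : Matrix N n R}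
    (hV : Vᴴ * V = 1) {L₁ L₂ : Matrix N N R} (hL : Commute L₁ L₂) {A P : Matrix n n R}
    (hPA : P * A = A) (hPA' : P * Aᴴ = Aᴴ) (h₁ : L₁ * V * P = V * A) (h₂ : L₂ * V * P = V * Aᴴ) :
    IsStarNormal A := by
  refine ⟨mul_right_injective_of_inv Vᴴ V hV ?_⟩
  calc V * (Aᴴ * A) = L₂ * V * P * A := by rw [h₂, Matrix.mul_assoc]
    _ = L₂ * (L₁ * V * P) := by rw [Matrix.mul_assoc, hPA, Matrix.mul_assoc, h₁]
    _ = L₁ * (L₂ * V * P) := by simp only [← Matrix.mul_assoc, hL.eq]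
    _ = L₁ * V * P * Aᴴ := by rw [h₂, Matrix.mul_assoc (L₁ * V), hPA', Matrix.mul_assoc]
    _ = V * (A * Aᴴ) := by rw [h₁, Matrix.mul_assoc]

end Intertwining

section Reproduces

variable {𝕜 n N : Type*} [RCLike 𝕜] [Fintype n] [DecidableEq n] [Fintype N] [DecidableEq N]

/-- The matrix `V * ρ * Vᴴ` carries a copy of `ρ`: under the representation `π` its expectation
values are those of `ρ`. For `V` a Stinespring isometry of a channel and `π` the action on one
output factor, this says that the corresponding marginal of the channel output is `ρ`. -/
def Reproduces (π : Matrix n n 𝕜 →⋆ₐ[𝕜] Matrix N N 𝕜) (V : Matrix N n 𝕜) (ρ : Matrix n n 𝕜) :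
    Prop :=
  ∀ X, (π X * (V * ρ * Vᴴ)).trace = (X * ρ).trace

namespace Reproduces

variable {π : Matrix n n 𝕜 →⋆ₐ[𝕜] Matrix N N 𝕜} {V : Matrix N n 𝕜}

theorem add {ρ τ : Matrix n n 𝕜} (hρ : Reproduces π V ρ) (hτ : Reproduces π V τ) :
    Reproduces π V (ρ + τ) := fun X => by
  simp only [Matrix.mul_add, Matrix.add_mul, trace_add, hρ X, hτ X]

theorem map_mul_mul_eq {σ A : Matrix n n 𝕜} (hV : Vᴴ * V = 1) (hσ : σ.PosSemidef)
    (h : Reproduces π V σ) (hA : Reproduces π V (A * σ)) : π A * V * σ = V * A * σ := by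
  have hπ : (π A)ᴴ = π Aᴴ := (map_star π A).symm
  refine mul_mul_eq_mul_mul_of_trace_eq hV hσ ?_ ?_
  · rw [hπ, ← map_mul, h]
  · rw [hπ, hA, Matrix.mul_assoc]

theorem map_conjTranspose_mul_mul_eq {σ A Z : Matrix n n 𝕜} (hV : Vᴴ * V = 1)
    (hσ : σ.PosSemidef) (h : Reproduces π V σ) (hA : Reproduces π V (A * σ)) (hZ : Aᴴ = σ * Z) :
    π Aᴴ * V * σ = V * Aᴴ * σ := by
  have hπ : (π Aᴴ)ᴴ = π A := (map_star π Aᴴ).symm.trans (congrArg π (star_star A))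
  refine mul_mul_eq_mul_mul_of_trace_eq hV hσ ?_ ?_
  · rw [hπ, conjTranspose_conjTranspose, ← map_mul, h]
  · calc ((π Aᴴ)ᴴ * (V * (Aᴴ * σ) * Vᴴ)).trace
        = (π A * V * σ * (Z * σ * Vᴴ)).trace := by
          rw [hπ, hZ]
          simp only [Matrix.mul_assoc]
      _ = (V * (A * Aᴴ * σ) * Vᴴ).trace := by
          rw [h.map_mul_mul_eq hV hσ hA, hZ]
          simp only [Matrix.mul_assoc]
      _ = (Aᴴᴴ * Aᴴ * σ).trace := by
          rw [trace_mul_comm, ← Matrix.mul_assoc, hV, Matrix.one_mul, conjTranspose_conjTranspose]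

open scoped Matrix.Norms.L2Operator MatrixOrder in
theorem commute {π₁ π₂ : Matrix n n ℂ →⋆ₐ[ℂ] Matrix N N ℂ} (hπ : ∀ X Y, Commute (π₁ X) (π₂ Y))
    {V : Matrix N n ℂ} {ρ τ : Matrix n n ℂ} (hV : Vᴴ * V = 1)
    (hρ : ρ.PosSemidef) (hτ : τ.PosSemidef)
    (hρ₁ : Reproduces π₁ V ρ) (hτ₁ : Reproduces π₁ V τ) (hρ₂ : Reproduces π₂ V ρ)
    (hτ₂ : Reproduces π₂ V τ) : Commute ρ τ := by
  obtain ⟨A, G, hAσ, hP, hPA, hAP⟩ := exists_mul_add_eq_and_support hρ hτ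
  set σ := ρ + τ
  have hσ : σ.PosSemidef := hρ.add hτ
  have hPA' : σ * G * Aᴴ = Aᴴ := by
    simpa only [conjTranspose_mul, hP.eq] using congrArg conjTranspose hAP
  have hAP' : Aᴴ * (σ * G) = Aᴴ := by
    simpa only [conjTranspose_mul, hP.eq] using congrArg conjTranspose hPA
  have hA₁ : Reproduces π₁ V (A * σ) := hAσ ▸ hρ₁
  have hA₂ : Reproduces π₂ V (A * σ) := hAσ ▸ hρ₂
  have h₁ : π₁ A * V * (σ * G) = V * A := by
    rw [← Matrix.mul_assoc, (hρ₁.add hτ₁).map_mul_mul_eq hV hσ hA₁, Matrix.mul_assoc,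
      Matrix.mul_assoc, hAP]
  have h₂ : π₂ Aᴴ * V * (σ * G) = V * Aᴴ := by
    rw [← Matrix.mul_assoc, (hρ₂.add hτ₂).map_conjTranspose_mul_mul_eq hV hσ hA₂
      (hPA'.symm.trans (Matrix.mul_assoc _ _ _)), Matrix.mul_assoc, Matrix.mul_assoc, hAP']
  have hnormal : IsStarNormal A := isStarNormal_of_intertwining hV (hπ A Aᴴ) hPA hPA' h₁ h₂
  have hcomm : Commute A σ :=
    commute_of_isStarNormal_of_isSelfAdjoint_mul hnormal hσ.nonneg (hAσ.symm ▸ hρ.1)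
  have hρσ : Commute ρ σ := hAσ ▸ hcomm.mul_left (Commute.refl σ)
  exact (add_sub_cancel_left ρ τ) ▸ hρσ.sub_right (Commute.refl ρ)

end Reproduces

end Reproduces

section Ampliation

variable (R m n : Type*) [CommSemiring R] [StarRing R] [Fintype m] [DecidableEq m] [Fintype n]
  [DecidableEq n]

/-- The representation `X ↦ X ⊗ 1` of matrices on the first factor of a tensor product. -/
def leftAmpliation : Matrix m m R →⋆ₐ[R] Matrix (m × n) (m × n) R where
  toFun X := X ⊗ₖ 1
  map_one' := one_kronecker_one
  map_mul' X Y := by rw [← mul_kronecker_mul, Matrix.mul_one]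
  map_zero' := zero_kronecker _
  map_add' X Y := add_kronecker _ _ _
  commutes' r := by simp only [Algebra.algebraMap_eq_smul_one, smul_kronecker, one_kronecker_one]
  map_star' X := by simp only [star_eq_conjTranspose, conjTranspose_kronecker, conjTranspose_one]

/-- The representation `Y ↦ 1 ⊗ Y` of matrices on the second factor of a tensor product. -/
def rightAmpliation : Matrix n n R →⋆ₐ[R] Matrix (m × n) (m × n) R where
  toFun Y := 1 ⊗ₖ Y
  map_one' := one_kronecker_one
  map_mul' X Y := by rw [← mul_kronecker_mul, Matrix.mul_one]
  map_zero' := kronecker_zero _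
  map_add' X Y := kronecker_add _ _ _
  commutes' r := by simp only [Algebra.algebraMap_eq_smul_one, kronecker_smul, one_kronecker_one]
  map_star' X := by simp only [star_eq_conjTranspose, conjTranspose_kronecker, conjTranspose_one]

variable {R m n}

theorem commute_leftAmpliation_rightAmpliation (X : Matrix m m R) (Y : Matrix n n R) :
    Commute (leftAmpliation R m n X) (rightAmpliation R m n Y) := by
  change X ⊗ₖ 1 * 1 ⊗ₖ Y = 1 ⊗ₖ Y * X ⊗ₖ 1
  simp only [← mul_kronecker_mul, Matrix.one_mul, Matrix.mul_one]

end Ampliation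

section PartialTrace

variable {m n : Type*} [Fintype m] [Fintype n]

theorem trace_ptraceLeft (M : Matrix (m × n) (m × n) ℂ) : (ptraceLeft M).trace = M.trace := by
  simp only [trace, diag, ptraceLeft, of_apply, Fintype.sum_prod_type]
  exact Finset.sum_comm

variable [DecidableEq m] [DecidableEq n]

theorem trace_leftAmpliation_mul (A : Matrix m m ℂ) (M : Matrix (m × n) (m × n) ℂ) :
    (leftAmpliation ℂ m n A * M).trace = (A * ptraceRight M).trace := by
  change (A ⊗ₖ 1 * M).trace = _
  simp only [trace, diag, mul_apply, kroneckerMap_apply, ptraceRight, of_apply,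
    Fintype.sum_prod_type, one_apply, mul_ite, mul_one, mul_zero, ite_mul, zero_mul,
    Finset.sum_ite_eq, Finset.mem_univ, if_true, Finset.mul_sum]
  exact Finset.sum_congr rfl fun i _ => Finset.sum_comm

theorem trace_rightAmpliation_mul (A : Matrix n n ℂ) (M : Matrix (m × n) (m × n) ℂ) :
    (rightAmpliation ℂ m n A * M).trace = (A * ptraceLeft M).trace := by
  change (1 ⊗ₖ A * M).trace = _
  simp only [trace, diag, mul_apply, kroneckerMap_apply, ptraceLeft, of_apply,
    Fintype.sum_prod_type, one_apply, ite_mul, one_mul, zero_mul, Finset.sum_ite_irrel,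
    Finset.sum_const_zero, Finset.sum_ite_eq, Finset.mem_univ, if_true, Finset.mul_sum]
  rw [Finset.sum_comm]
  exact Finset.sum_congr rfl fun i _ => Finset.sum_comm

end PartialTrace

section Stinespring

variable {m n : Type*}

/-- The Choi matrix of `Λ`: the block at `(i, j)` is the image of the matrix unit `single i j 1`. -/
def choiMatrix {R : Type*} [CommSemiring R] [DecidableEq n] (Λ : Matrix n n R →ₗ[R] Matrix m m R) :
    Matrix (n × m) (n × m) R :=
  of fun p q => Λ (single p.1 q.1 1) p.2 q.2

theorem apply_apply_eq_sum_choiMatrix {R : Type*} [CommSemiring R] [Fintype n] [DecidableEq n]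
    (Λ : Matrix n n R →ₗ[R] Matrix m m R) (X : Matrix n n R) (x y : m) :
    Λ X x y = ∑ i, ∑ j, X i j * choiMatrix Λ (i, x) (j, y) := by
  conv_lhs => rw [matrix_eq_sum_single X]
  simp only [map_sum, Matrix.sum_apply, choiMatrix, of_apply]
  refine Finset.sum_congr rfl fun i _ => Finset.sum_congr rfl fun j _ => ?_
  rw [← smul_eq_mul, ← Matrix.smul_apply, ← map_smul, smul_single, smul_eq_mul, mul_one]

/- Up to relabelling `n` by `Fin (Nat.card n)`, the Choi matrix is the image under `id ⊗ Λ`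
of the unnormalized maximally entangled projection. -/
theorem IsCompletelyPositive.posSemidef_choiMatrix [Finite n] [DecidableEq n]
    {Λ : Matrix n n ℂ →ₗ[ℂ] Matrix m m ℂ} (hΛ : IsCompletelyPositive Λ) :
    (choiMatrix Λ).PosSemidef := by
  let e := Finite.equivFin n
  let v : Fin (Nat.card n) × n → ℂ := fun p => if e.symm p.1 = p.2 then 1 else 0
  have hv (i j : n) :
      (of fun b b' => vecMulVec v (star v) (e i, b) (e j, b')) = single i j (1 : ℂ) := by
    ext b b'
    simp [vecMulVec, v, single_apply, ← ite_and, eq_comm, and_comm]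
  have hchoi : choiMatrix Λ =
      (idTensor Λ (vecMulVec v (star v))).submatrix (Prod.map e id) (Prod.map e id) := by
    ext p q
    exact congrFun (congrFun (congrArg Λ (hv p.1 q.1).symm) p.2) q.2
  rw [hchoi]
  exact (hΛ _ _ (posSemidef_vecMulVec_self_star v)).submatrix _

theorem IsCompletelyPositive.exists_eq_ptraceLeft [Fintype m] [Fintype n]
    {Λ : Matrix n n ℂ →ₗ[ℂ] Matrix m m ℂ} (hΛ : IsCompletelyPositive Λ) :
    ∃ V : Matrix ((n × m) × m) n ℂ, ∀ X, Λ X = ptraceLeft (V * X * Vᴴ) := by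
  classical
  obtain ⟨B, hB⟩ := exists_eq_conjTranspose_mul_self hΛ.posSemidef_choiMatrix
  refine ⟨of fun k i => star (B k.1 (i, k.2)), fun X => ?_⟩
  ext x y
  simp only [apply_apply_eq_sum_choiMatrix, hB, ptraceLeft, of_apply, mul_apply,
    conjTranspose_apply, star_star, Finset.mul_sum, Finset.sum_mul]
  rw [Finset.sum_comm, Finset.sum_comm (s := Finset.univ (α := n × m))]
  refine Finset.sum_congr rfl fun j _ => Finset.sum_comm.trans ?_
  exact Finset.sum_congr rfl fun k _ => Finset.sum_congr rfl fun i _ => by ring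

theorem conjTranspose_mul_self_eq_one_of_trace_eq {R : Type*} [CommSemiring R] [StarRing R]
    [Fintype n] [DecidableEq n] [Fintype m] {V : Matrix m n R}
    (h : ∀ X : Matrix n n R, (V * X * Vᴴ).trace = X.trace) : Vᴴ * V = 1 := by
  rw [ext_iff_trace_mul_right]
  intro X
  rw [Matrix.one_mul, ← h X, trace_mul_comm _ Vᴴ, Matrix.mul_assoc]

theorem IsQuantumChannel.exists_isometry_eq_ptraceLeft [Fintype m] [Fintype n] [DecidableEq n]
    {Λ : Matrix n n ℂ →ₗ[ℂ] Matrix m m ℂ} (hΛ : IsQuantumChannel Λ) :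
    ∃ V : Matrix ((n × m) × m) n ℂ, Vᴴ * V = 1 ∧ ∀ X, Λ X = ptraceLeft (V * X * Vᴴ) := by
  obtain ⟨V, hV⟩ := hΛ.1.exists_eq_ptraceLeft
  refine ⟨V, conjTranspose_mul_self_eq_one_of_trace_eq fun X => ?_, hV⟩
  rw [← trace_ptraceLeft, ← hV, hΛ.2]

end Stinespring

section Broadcasts

variable {n : Type*} [Fintype n]

/-- The map `Λ` broadcasts `ρ`: both marginals of `Λ ρ` are equal to `ρ`. -/
def Broadcasts (Λ : Matrix n n ℂ →ₗ[ℂ] Matrix (n × n) (n × n) ℂ) (ρ : Matrix n n ℂ) : Prop :=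
  ptraceRight (Λ ρ) = ρ ∧ ptraceLeft (Λ ρ) = ρ

theorem commute_of_broadcasts {Λ : Matrix n n ℂ →ₗ[ℂ] Matrix (n × n) (n × n) ℂ}
    (hΛ : IsQuantumChannel Λ) {ρ τ : Matrix n n ℂ} (hρ : ρ.PosSemidef) (hτ : τ.PosSemidef)
    (hΛρ : Broadcasts Λ ρ) (hΛτ : Broadcasts Λ τ) : Commute ρ τ := by
  classical
  obtain ⟨V, hV, hΛV⟩ := hΛ.exists_isometry_eq_ptraceLeft
  let π := rightAmpliation ℂ (n × (n × n)) (n × n)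
  have h₁ {ω : Matrix n n ℂ} (hω : Broadcasts Λ ω) :
      Reproduces (π.comp (leftAmpliation ℂ n n)) V ω := fun X => by
    refine (trace_rightAmpliation_mul _ _).trans ?_
    rw [← hΛV]
    exact (trace_leftAmpliation_mul _ _).trans (by rw [hω.1])
  have h₂ {ω : Matrix n n ℂ} (hω : Broadcasts Λ ω) :
      Reproduces (π.comp (rightAmpliation ℂ n n)) V ω := fun X => by
    refine (trace_rightAmpliation_mul _ _).trans ?_
    rw [← hΛV]
    exact (trace_rightAmpliation_mul _ _).trans (by rw [hω.2])
  have hcomm (X Y : Matrix n n ℂ) : Commute (π.comp (leftAmpliation ℂ n n) X)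
      (π.comp (rightAmpliation ℂ n n) Y) :=
    (commute_leftAmpliation_rightAmpliation X Y).map π
  exact Reproduces.commute hcomm hV hρ hτ (h₁ hΛρ) (h₁ hΛτ) (h₂ hΛρ) (h₂ hΛτ)

end Broadcasts

section JointDiagonalization

variable {𝕜 ι n : Type*} [RCLike 𝕜] [Fintype n]

open Module in
theorem exists_orthonormalBasis_forall_apply_eq_smul {E : Type*} [NormedAddCommGroup E]
    [InnerProductSpace 𝕜 E] [FiniteDimensional 𝕜 E] (hn : finrank 𝕜 E = Fintype.card n)
    {T : ι → E →ₗ[𝕜] E} (hT : ∀ i, (T i).IsSymmetric) (hcomm : ∀ i j, Commute (T i) (T j)) :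
    ∃ (b : OrthonormalBasis n 𝕜 E) (d : ι → n → 𝕜), ∀ i k, T i (b k) = d i k • b k := by
  classical
  have hint := LinearMap.IsSymmetric.directSum_isInternal_of_pairwise_commute hT
    fun i j _ => hcomm i j
  have := hint.submodule_iSupIndep.fintypeNeBotOfFiniteDimensional
  have hint' := DirectSum.isInternal_ne_bot_iff.mpr hint
  have horth := (LinearMap.IsSymmetric.orthogonalFamily_iInf_eigenspaces hT).comp
    (Subtype.val_injective (p := fun χ : ι → 𝕜 => ⨅ i, End.eigenspace (T i) (χ i) ≠ ⊥))
  let e := Fintype.equivFin n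
  refine ⟨(hint'.subordinateOrthonormalBasis hn horth).reindex e.symm, fun i k =>
    (hint'.subordinateOrthonormalBasisIndex hn (e k) horth).1 i, fun i k => ?_⟩
  rw [OrthonormalBasis.reindex_apply, e.symm_symm, ← End.mem_eigenspace_iff]
  exact Submodule.mem_iInf _ |>.mp
    (hint'.subordinateOrthonormalBasis_subordinate hn (e k) horth) i

theorem exists_unitary_forall_eq_mul_diagonal_mul [DecidableEq n] {ρ : ι → Matrix n n 𝕜}
    (hρ : ∀ i, (ρ i).IsHermitian) (hcomm : ∀ i j, Commute (ρ i) (ρ j)) :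
    ∃ U ∈ unitaryGroup n 𝕜, ∃ d : ι → n → 𝕜, ∀ i, ρ i = U * diagonal (d i) * Uᴴ := by
  obtain ⟨b, d, hd⟩ := exists_orthonormalBasis_forall_apply_eq_smul (n := n) (by simp)
    (fun i => isSymmetric_toEuclideanLin_iff.mpr (hρ i))
    (fun i j => (hcomm i j).map (toLpLinAlgEquiv 2))
  let U := (EuclideanSpace.basisFun n 𝕜).toBasis.toMatrix b
  have hU : U ∈ unitaryGroup n 𝕜 :=
    (EuclideanSpace.basisFun n 𝕜).toMatrix_orthonormalBasis_mem_unitary b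
  refine ⟨U, hU, d, fun i => ?_⟩
  have hρU : ρ i * U = U * diagonal (d i) := by
    ext j k
    rw [mul_diagonal, mul_comm]
    simpa [U, mul_apply, Module.Basis.toMatrix_apply, mulVec, dotProduct] using
      congrFun (congrArg WithLp.ofLp (hd i k)) j
  rw [← hρU, Matrix.mul_assoc, ← star_eq_conjTranspose, mem_unitaryGroup_iff.mp hU, Matrix.mul_one]

end JointDiagonalization

section KhatriRao

variable {l m n : Type*}

/-- The column-wise Kronecker (Khatri–Rao) product: its `i`-th column is the tensor product of the
`i`-th columns of `A` and `B`. -/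
def khatriRao {R : Type*} [Mul R] (A : Matrix l n R) (B : Matrix m n R) : Matrix (l × m) n R :=
  of fun p i => A p.1 i * B p.2 i

theorem conjTranspose_khatriRao_mul_khatriRao {R : Type*} [CommSemiring R] [StarRing R] [Fintype l]
    [Fintype m] (A C : Matrix l n R) (B D : Matrix m n R) :
    (khatriRao A B)ᴴ * khatriRao C D = (Aᴴ * C) ⊙ (Bᴴ * D) := by
  ext i j
  simp only [mul_apply, conjTranspose_apply, khatriRao, of_apply, hadamard_apply, star_mul',
    Fintype.sum_prod_type, Finset.sum_mul_sum]
  exact Finset.sum_congr rfl fun a _ => Finset.sum_congr rfl fun b _ => by ring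

variable [Fintype n]

theorem ptraceRight_khatriRao_mul_mul_conjTranspose [Fintype m] (A : Matrix l n ℂ)
    (B : Matrix m n ℂ) (X : Matrix n n ℂ) :
    ptraceRight (khatriRao A B * X * (khatriRao A B)ᴴ) = A * (X ⊙ (Bᴴ * B)ᵀ) * Aᴴ := by
  ext a a'
  simp only [ptraceRight, of_apply, mul_apply, conjTranspose_apply, khatriRao, hadamard_apply,
    transpose_apply, star_mul', Finset.sum_mul, Finset.mul_sum]
  rw [Finset.sum_comm]
  refine Finset.sum_congr rfl fun j _ => Finset.sum_comm.trans ?_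
  exact Finset.sum_congr rfl fun i _ => Finset.sum_congr rfl fun b _ => by ring

theorem ptraceLeft_khatriRao_mul_mul_conjTranspose [Fintype l] (A : Matrix l n ℂ)
    (B : Matrix m n ℂ) (X : Matrix n n ℂ) :
    ptraceLeft (khatriRao A B * X * (khatriRao A B)ᴴ) = B * (X ⊙ (Aᴴ * A)ᵀ) * Bᴴ := by
  ext b b'
  simp only [ptraceLeft, of_apply, mul_apply, conjTranspose_apply, khatriRao, hadamard_apply,
    transpose_apply, star_mul', Finset.sum_mul, Finset.mul_sum]
  rw [Finset.sum_comm]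
  refine Finset.sum_congr rfl fun j _ => Finset.sum_comm.trans ?_
  exact Finset.sum_congr rfl fun i _ => Finset.sum_congr rfl fun b _ => by ring

end KhatriRao

section Conjugation

variable {m n : Type*} [Fintype n]

/-- The linear map `X ↦ W * X * Wᴴ`, the channel with the single Kraus operator `W`. -/
def conjugation (W : Matrix m n ℂ) : Matrix n n ℂ →ₗ[ℂ] Matrix m m ℂ where
  toFun X := W * X * Wᴴ
  map_add' X Y := by rw [Matrix.mul_add, Matrix.add_mul]
  map_smul' c X := by rw [Matrix.mul_smul, Matrix.smul_mul, RingHom.id_apply]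

theorem idTensor_conjugation {k : Type*} [Fintype k] [DecidableEq k] (W : Matrix m n ℂ)
    (M : Matrix (k × n) (k × n) ℂ) :
    idTensor (conjugation W) M = (1 : Matrix k k ℂ) ⊗ₖ W * M * ((1 : Matrix k k ℂ) ⊗ₖ W)ᴴ := by
  ext ⟨i, x⟩ ⟨j, y⟩
  simp only [idTensor, conjugation, LinearMap.coe_mk, AddHom.coe_mk, of_apply, mul_apply,
    conjTranspose_apply, kroneckerMap_apply, Fintype.sum_prod_type, one_apply, ite_mul, one_mul,
    zero_mul, Finset.sum_ite_irrel, Finset.sum_const_zero, Finset.sum_ite_eq, Finset.mem_univ,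
    if_true, apply_ite star, star_zero, mul_ite, mul_zero]

theorem isCompletelyPositive_conjugation [Finite m] (W : Matrix m n ℂ) :
    IsCompletelyPositive (conjugation W) := fun k M hM => by
  rw [idTensor_conjugation]
  exact hM.mul_mul_conjTranspose_same _

theorem isQuantumChannel_conjugation [Fintype m] [DecidableEq n] {W : Matrix m n ℂ}
    (hW : Wᴴ * W = 1) : IsQuantumChannel (conjugation W) := by
  refine ⟨isCompletelyPositive_conjugation W, fun X => ?_⟩
  change (W * X * Wᴴ).trace = X.trace
  rw [trace_mul_comm, ← Matrix.mul_assoc, hW, Matrix.one_mul]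

end Conjugation

section Cloning

variable {n : Type*} [Fintype n] [DecidableEq n]

/-- The isometry that clones the orthonormal basis formed by the columns `u i` of the unitary `U`:
it maps `u i` to `u i ⊗ u i`. -/
def cloningIsometry (U : Matrix n n ℂ) : Matrix (n × n) n ℂ := khatriRao U U * Uᴴ

theorem conjTranspose_cloningIsometry_mul_self {U : Matrix n n ℂ} (hU : U ∈ unitaryGroup n ℂ) :
    (cloningIsometry U)ᴴ * cloningIsometry U = 1 := by
  have hUU : Uᴴ * U = 1 := mem_unitaryGroup_iff'.mp hU
  have hK : (khatriRao U U)ᴴ * khatriRao U U = 1 := by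
    rw [conjTranspose_khatriRao_mul_khatriRao, hUU]
    exact hadamard_one_eq_one_iff.mpr diag_one
  rw [cloningIsometry, conjTranspose_mul, conjTranspose_conjTranspose, Matrix.mul_assoc,
    ← Matrix.mul_assoc _ _ Uᴴ, hK, Matrix.one_mul]
  exact mem_unitaryGroup_iff.mp hU

theorem broadcasts_conjugation_cloningIsometry {U : Matrix n n ℂ} (hU : U ∈ unitaryGroup n ℂ)
    (d : n → ℂ) :
    Broadcasts (conjugation (cloningIsometry U)) (U * diagonal d * Uᴴ) := by
  have hUU : Uᴴ * U = 1 := mem_unitaryGroup_iff'.mp hU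
  have hK : conjugation (cloningIsometry U) (U * diagonal d * Uᴴ) =
      khatriRao U U * diagonal d * (khatriRao U U)ᴴ :=
    calc khatriRao U U * Uᴴ * (U * diagonal d * Uᴴ) * (khatriRao U U * Uᴴ)ᴴ
        = khatriRao U U * (Uᴴ * U) * diagonal d * (Uᴴ * U) * (khatriRao U U)ᴴ := by
          simp only [conjTranspose_mul, conjTranspose_conjTranspose, Matrix.mul_assoc]
      _ = _ := by rw [hUU, Matrix.mul_one, Matrix.mul_one]
  have hd : diagonal d ⊙ (Uᴴ * U)ᵀ = diagonal d := by
    rw [hUU, transpose_one, hadamard_one, diag_diagonal]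
  exact ⟨by rw [hK, ptraceRight_khatriRao_mul_mul_conjTranspose, hd],
    by rw [hK, ptraceLeft_khatriRao_mul_mul_conjTranspose, hd]⟩

end Cloning

theorem no_broadcasting_general {ι n : Type*} [Fintype n] (ρ : ι → Matrix n n ℂ)
    (hρ : ∀ i, (ρ i).PosSemidef) :
    (∃ Λ : Matrix n n ℂ →ₗ[ℂ] Matrix (n × n) (n × n) ℂ, IsQuantumChannel Λ ∧
        ∀ i, Broadcasts Λ (ρ i)) ↔
      ∀ i j, Commute (ρ i) (ρ j) := by
  classical
  constructor
  · rintro ⟨Λ, hΛ, hΛρ⟩ i j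
    exact commute_of_broadcasts hΛ (hρ i) (hρ j) (hΛρ i) (hΛρ j)
  · intro hcomm
    obtain ⟨U, hU, d, hd⟩ := exists_unitary_forall_eq_mul_diagonal_mul (fun i => (hρ i).1) hcomm
    refine ⟨conjugation (cloningIsometry U),
      isQuantumChannel_conjugation (conjTranspose_cloningIsometry_mul_self hU), fun i => ?_⟩
    rw [hd i]
    exact broadcasts_conjugation_cloningIsometry hU (d i)

/-- **No-broadcasting theorem.** Two density matrices `ρ` and `ρ'` can be broadcast by
one and the same quantum channel (both marginals of the output equal the input, for both
states) if and only if they commute. -/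
theorem no_broadcasting {n : Type*} [Fintype n] [DecidableEq n]
    (ρ ρ' : Matrix n n ℂ) (hρ : IsDensityMatrix ρ) (hρ' : IsDensityMatrix ρ') :
    (∃ Λ : Matrix n n ℂ →ₗ[ℂ] Matrix (n × n) (n × n) ℂ, IsQuantumChannel Λ ∧
        ptraceRight (Λ ρ) = ρ ∧ ptraceLeft (Λ ρ) = ρ ∧
        ptraceRight (Λ ρ') = ρ' ∧ ptraceLeft (Λ ρ') = ρ') ↔
      ρ * ρ' = ρ' * ρ := by
  simpa [Broadcasts, and_assoc, commute_iff_eq, eq_comm] using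
    no_broadcasting_general ![ρ, ρ'] (Fin.forall_fin_two.mpr ⟨hρ.1, hρ'.1⟩)
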